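/- arXiv:1901.07904 — 4 statements merged into one kernel-verified Lean document; each statement's English description precedes it below -/
import Mathlib

section
/- Let N : ℕ, let E : Fin N → Finset (Fin N) be an assignment of index sets, and let x : Fin N → ℝ be such that x i = 0 or x i = 1 for every i, and x i = ∏_{j ∈ E i} x j for every i. Then all four families of quadratic equalities hold: (1) (x i)^2 = x i for all i; (2) x i * x j = x i for all i, j with E j ⊆ E i; (3) x j * x k = x i for all i, j, k with E i = E j ∪ E k; (4) x i * x j = x k * x l for all i, j, k, l with E i ∪ E j = E k ∪ E l. -/
/-! Products of 0/1 values are idempotent, so repeated factors can be dropped and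
`(∏ S) * (∏ T) = ∏ (S ∪ T)` for all finite index sets (`prod_mul_prod_eq_prod_union`).
Since each `x i` is the product over `E i`, the product `x i * x j` depends only on
`E i ∪ E j`, which gives all the families of equalities. -/

theorem prod_mul_prod_eq_prod_union {ι : Type*} [DecidableEq ι] (x : ι → ℝ)
    (hsq : ∀ i, x i * x i = x i) (S T : Finset ι) :
    (∏ j ∈ S, x j) * ∏ j ∈ T, x j = ∏ j ∈ S ∪ T, x j := by
  have hidem : (∏ j ∈ S ∩ T, x j) * ∏ j ∈ S ∩ T, x j = ∏ j ∈ S ∩ T, x j := by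
    rw [← Finset.prod_mul_distrib]
    exact Finset.prod_congr rfl fun i _ => hsq i
  have hsub : S ∩ T ⊆ S ∪ T := Finset.inter_subset_left.trans Finset.subset_union_left
  rw [← Finset.prod_union_inter, ← Finset.prod_sdiff hsub, mul_assoc, hidem]

theorem pqcr_valid_quadratic_equalities (N : ℕ) (E : Fin N → Finset (Fin N))
    (x : Fin N → ℝ) (hx : ∀ i, x i = 0 ∨ x i = 1)
    (hE : ∀ i, x i = ∏ j ∈ E i, x j) :
    (∀ i, (x i) ^ 2 = x i) ∧
    (∀ i j, E j ⊆ E i → x i * x j = x i) ∧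
    (∀ i j k, E i = E j ∪ E k → x j * x k = x i) ∧
    (∀ i j k l, E i ∪ E j = E k ∪ E l → x i * x j = x k * x l) := by
  have hsq : ∀ i, x i * x i = x i := fun i => by
    rcases hx i with h | h <;> simp [h]
  have hmul : ∀ i j, x i * x j = ∏ m ∈ E i ∪ E j, x m := fun i j => by
    rw [← prod_mul_prod_eq_prod_union x hsq, ← hE, ← hE]
  refine ⟨fun i => by rw [sq, hsq], fun i j h => ?_, fun i j k h => ?_, fun i j k l h => ?_⟩
  · rw [hmul, Finset.union_eq_left.mpr h, ← hE]
  · rw [hmul, ← h, ← hE]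
  · rw [hmul, hmul, h]
end

section
/- Let n : ℕ and let M : Matrix (Fin n) (Fin n) ℝ be positive semidefinite. Let i, j be indices and a, b : ℝ with M i i = a, M j j = b, and M i j = a. Then a ≤ b. -/
theorem psd_diag_le_of_entry (n : ℕ) (M : Matrix (Fin n) (Fin n) ℝ)
    (hM : M.PosSemidef) (i j : Fin n) (a b : ℝ)
    (hii : M i i = a) (hjj : M j j = b) (hij : M i j = a) :
    a ≤ b := by
  have hji : M j i = a := by simpa [hij] using hM.isHermitian.apply i j
  -- The quadratic form at `e_i - e_j` is `a - 2 * a + b`; passing to the submatrix on `![i, j]`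
  -- also covers `i = j`.
  have h := (hM.submatrix ![i, j]).dotProduct_mulVec_nonneg ![1, -1]
  simp [Matrix.mulVec, dotProduct, Fin.sum_univ_two, hii, hjj, hij, hji] at h
  linarith
end

section
/- Let N : ℕ and let M : Matrix (Fin (N+1)) (Fin (N+1)) ℝ be a symmetric positive semidefinite matrix with M 0 0 = 1. Let i, j, k : Fin (N+1) be distinct indices, all different from 0, and let a, b, c : ℝ. Suppose M 0 i = a, M 0 j = b, M 0 k = c, M i i = a, M j j = b, M k k = c, M i j = a, M i k = a, and M j k = a. Then b + c − 1 ≤ a. -/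
theorem moment_matrix_fortet_d (N : ℕ)
    (M : Matrix (Fin (N + 1)) (Fin (N + 1)) ℝ) (hsymm : M.IsSymm)
    (hM : M.PosSemidef) (h00 : M 0 0 = 1)
    (i j k : Fin (N + 1)) (hij : i ≠ j) (hik : i ≠ k) (hjk : j ≠ k)
    (hi : i ≠ 0) (hj : j ≠ 0) (hk : k ≠ 0) (a b c : ℝ)
    (h0i : M 0 i = a) (h0j : M 0 j = b) (h0k : M 0 k = c)
    (hii : M i i = a) (hjj : M j j = b) (hkk : M k k = c)
    (hMij : M i j = a) (hMik : M i k = a) (hMjk : M j k = a) :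
    b + c - 1 ≤ a := by
  -- `xᵀ M x ≥ 0` for `x = e₀ + eᵢ - eⱼ - eₖ`, computed in the principal submatrix on `0, i, j, k`.
  have h := (hM.submatrix ![0, i, j, k]).dotProduct_mulVec_nonneg ![1, 1, -1, -1]
  have hi0 := hsymm.apply 0 i
  have hj0 := hsymm.apply 0 j
  have hk0 := hsymm.apply 0 k
  have hji := hsymm.apply i j
  have hki := hsymm.apply i k
  have hkj := hsymm.apply j k
  simp [dotProduct, Matrix.mulVec, Fin.sum_univ_four] at h
  linarith
end

section
/- Let N : ℕ and let M : Matrix (Fin (N+1)) (Fin (N+1)) ℝ be a symmetric positive semidefinite matrix with M 0 0 = 1. Let i, j, k : Fin (N+1) be distinct indices, all different from 0, and let a, b, c : ℝ. Suppose M 0 i = a, M 0 j = b, M 0 k = c, M i i = a, M j j = b, M k k = c, M i j = a, M i k = a, and M j k = a. Then all four Fortet inequalities hold: 0 ≤ a, a ≤ b, a ≤ c, and b + c − 1 ≤ a. -/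
/-!
Each inequality is the nonnegativity of the quadratic form `v ↦ vᵀ M v` at an integer vector `v`
supported on the indices `0, i, j, k`: `e_i` gives `0 ≤ a`, `e_i - e_j` gives `a ≤ b`,
`e_i - e_k` gives `a ≤ c`, and `e_0 + e_i - e_j - e_k` gives `b + c - 1 ≤ a`.
-/

theorem moment_matrix_fortet_all (N : ℕ)
    (M : Matrix (Fin (N + 1)) (Fin (N + 1)) ℝ) (hsymm : M.IsSymm)
    (hM : M.PosSemidef) (h00 : M 0 0 = 1)
    (i j k : Fin (N + 1)) (hij : i ≠ j) (hik : i ≠ k) (hjk : j ≠ k)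
    (hi : i ≠ 0) (hj : j ≠ 0) (hk : k ≠ 0) (a b c : ℝ)
    (h0i : M 0 i = a) (h0j : M 0 j = b) (h0k : M 0 k = c)
    (hii : M i i = a) (hjj : M j j = b) (hkk : M k k = c)
    (hMij : M i j = a) (hMik : M i k = a) (hMjk : M j k = a) :
    0 ≤ a ∧ a ≤ b ∧ a ≤ c ∧ b + c - 1 ≤ a := by
  have hi0 : M i 0 = a := (hsymm.apply 0 i).trans h0i
  have hj0 : M j 0 = b := (hsymm.apply 0 j).trans h0j
  have hk0 : M k 0 = c := (hsymm.apply 0 k).trans h0k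
  have hji : M j i = a := (hsymm.apply i j).trans hMij
  have hki : M k i = a := (hsymm.apply i k).trans hMik
  have hkj : M k j = a := (hsymm.apply j k).trans hMjk
  have key := (hM.submatrix ![0, i, j, k]).dotProduct_mulVec_nonneg
  have h1 := key ![0, 1, 0, 0]
  have h2 := key ![0, 1, -1, 0]
  have h3 := key ![0, 1, 0, -1]
  have h4 := key ![1, 1, -1, -1]
  simp [dotProduct, Matrix.mulVec, Fin.sum_univ_four, *] at h1 h2 h3 h4
  refine ⟨?_, ?_, ?_, ?_⟩ <;> linarith
end
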